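/- Let L ≅ Sym(4) be the permutation group induced by the action of Sym(4) on the set of twelve ordered pairs of distinct elements of {1,2,3,4}. There exists a locally L pair (Γ,G) and a vertex x of Γ such that G_x^{[2]} ≠ 1. (Hence the conclusion G_x^{[3]} = 1 of the main theorem is best possible for n = 4.) -/

import Mathlib

open MulAction Pointwise

/-- The set of ordered pairs of distinct elements of `{1,…,n}`. -/
abbrev OPairs (n : ℕ) : Type := {p : Fin n × Fin n // p.1 ≠ p.2}

/-- `Sym(n)` acts on the ordered pairs of distinct elements. -/
instance opairsAction (n : ℕ) : MulAction (Equiv.Perm (Fin n)) (OPairs n) where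
  smul σ p := ⟨(σ p.1.1, σ p.1.2), fun h => p.2 (σ.injective h)⟩
  one_smul p := rfl
  mul_smul σ τ p := rfl

/-- Every element of `G` is an automorphism of `Γ`. -/
def PreservesAdj {V : Type*} (Γ : SimpleGraph V) (G : Subgroup (Equiv.Perm V)) : Prop :=
  ∀ g ∈ G, ∀ u v : V, Γ.Adj u v ↔ Γ.Adj (g u) (g v)

/-- The pointwise stabiliser in `G` of the ball of radius `i` around `x`. -/
def ballStab {V : Type*} (Γ : SimpleGraph V) (G : Subgroup (Equiv.Perm V)) (x : V) (i : ℕ) :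
    Subgroup G :=
  ⨅ (v : V) (_ : Γ.dist x v ≤ i), MulAction.stabilizer G v

/-- `(Γ, G)` is a locally `L` pair, for `L` the permutation group induced by `Sym(n)` on
ordered pairs of distinct elements of `{1,…,n}`. -/
def IsLocallyOPairs (n : ℕ) {V : Type*} (Γ : SimpleGraph V) (G : Subgroup (Equiv.Perm V)) :
    Prop :=
  PreservesAdj Γ G ∧ MulAction.IsPretransitive G V ∧
  ∀ x : V, ∃ (e : Γ.neighborSet x ≃ OPairs n)
      (φ : MulAction.stabilizer G x →* Equiv.Perm (Fin n)),
    Function.Surjective φ ∧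
    ∀ (g : MulAction.stabilizer G x) (v : Γ.neighborSet x),
      ((e.symm (φ g • e v) : Γ.neighborSet x) : V) = g • (v : V)

/-! Give the vertices of Tutte's 8-cage `T` vectors over the field with two elements such that, for
every vertex `x`, the three vectors of the neighbours of `x` form with `0` a Klein four-group `W x`.
The vector of `x` can be taken to be the set of vertices opposite to `x`, that is, at the maximal
distance from `x`, because every vertex is opposite to an even number of neighbours of any given
vertex. The vertices of `Γ` are the cosets `m + W x`, labelled by `x`; two are adjacent if their
labels are adjacent and the cosets meet.

A neighbour of a coset is determined by a point `p` in the intersection and by its label `y`, which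
we record as the point `q` with `q - p` the vector of `y`: the neighbours correspond to the ordered
pairs `(p, q)` of distinct points of the four-element coset. Translations move the points
transitively and the stabiliser of `x` in `Aut T` induces `Sym(3)` on the points other than a given
one, so affine maps induce `Sym(4)` on the coset. The linear lift of an automorphism of `T` fixing
the ball of radius `i` around `x` fixes the ball of radius `i` around `W x`, and the 8-cage has an
automorphism other than `1` fixing a ball of radius `2`.
-/

section Basics

variable {V : Type*} {Γ : SimpleGraph V} {G : Subgroup (Equiv.Perm V)}

theorem preservesAdj_of_forall_adj (h : ∀ g ∈ G, ∀ u v, Γ.Adj u v → Γ.Adj (g u) (g v)) :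
    PreservesAdj Γ G := fun g hg u v =>
  ⟨h g hg u v, fun huv => by simpa using h g⁻¹ (inv_mem hg) _ _ huv⟩

theorem mem_ballStab_iff {x : V} {i : ℕ} {g : G} :
    g ∈ ballStab Γ G x i ↔ ∀ v, Γ.dist x v ≤ i → (g : Equiv.Perm V) v = v := by
  simp only [ballStab, Subgroup.mem_iInf, mem_stabilizer_iff]
  rfl

theorem mem_ballStab_zero_iff (hΓ : Γ.Connected) {x : V} {g : G} :
    g ∈ ballStab Γ G x 0 ↔ (g : Equiv.Perm V) x = x := by
  simp [mem_ballStab_iff, hΓ.dist_eq_zero_iff]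

theorem exists_adj_dist_le_of_ne (hΓ : Γ.Connected) {x v : V} {i : ℕ} (hne : x ≠ v)
    (hv : Γ.dist x v ≤ i + 1) : ∃ y, Γ.Adj x y ∧ Γ.dist y v ≤ i := by
  obtain ⟨w, hw⟩ := hΓ.exists_walk_length_eq_dist x v
  cases w with
  | nil => exact absurd rfl hne
  | cons hxy w' =>
    rw [SimpleGraph.Walk.length_cons] at hw
    exact ⟨_, hxy, (SimpleGraph.dist_le w').trans (by lia)⟩

theorem mem_ballStab_succ_iff (hΓ : Γ.Connected) {x : V} {i : ℕ} {g : G} :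
    g ∈ ballStab Γ G x (i + 1) ↔
      (g : Equiv.Perm V) x = x ∧ ∀ y, Γ.Adj x y → g ∈ ballStab Γ G y i := by
  simp only [mem_ballStab_iff]
  refine ⟨fun h => ⟨h x (by simp), fun y hxy v hv => h v ?_⟩, fun ⟨hx, h⟩ v hv => ?_⟩
  · have := hΓ.dist_triangle (u := x) (v := y) (w := v)
    rw [SimpleGraph.dist_eq_one_iff_adj.2 hxy] at this
    lia
  · obtain rfl | hne := eq_or_ne x v
    · exact hx
    · obtain ⟨y, hxy, hy⟩ := exists_adj_dist_le_of_ne hΓ hne hv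
      exact h y hxy v hy

instance opairs_faithfulSMul (n : ℕ) : FaithfulSMul (Equiv.Perm (Fin n)) (OPairs n) where
  eq_of_smul_eq_smul {σ τ} h := by
    ext i
    by_contra hne
    have : Nontrivial (Fin n) := ⟨σ i, τ i, fun he => hne (congrArg Fin.val he)⟩
    obtain ⟨j, hj⟩ := exists_ne i
    exact hne congr(($(h ⟨(i, j), hj.symm⟩)).1.1.1)

/-- Faithfulness makes the element of `H` attached to each `g` unique, hence multiplicative. -/
theorem exists_surjective_hom_of_exists_smul {S H X Y : Type*} [Group S] [Group H] [MulAction S X]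
    [MulAction H Y] [FaithfulSMul H Y] {e : Y → X} (he : Function.Injective e)
    (hS : ∀ g : S, ∃ σ : H, ∀ y, g • e y = e (σ • y))
    (hH : ∀ σ : H, ∃ g : S, ∀ y, g • e y = e (σ • y)) :
    ∃ φ : S →* H, Function.Surjective φ ∧ ∀ g y, g • e y = e (φ g • y) := by
  choose f hf using hS
  have f_eq {g : S} {σ : H} (h : ∀ y, g • e y = e (σ • y)) : f g = σ :=
    eq_of_smul_eq_smul fun y => he ((hf g y).symm.trans (h y))
  refine ⟨MonoidHom.mk' f fun g k => f_eq fun y => ?_, fun σ => ?_, hf⟩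
  · rw [mul_smul, hf, hf, mul_smul]
  · obtain ⟨g, hg⟩ := hH σ
    exact ⟨g, f_eq hg⟩

theorem isLocallyOPairs_of_exists_perm {n : ℕ} (hadj : PreservesAdj Γ G)
    (htrans : IsPretransitive G V)
    (h : ∀ x, ∃ e : OPairs n ≃ Γ.neighborSet x,
      (∀ g : stabilizer G x, ∃ σ : Equiv.Perm (Fin n), ∀ p, g • (e p : V) = e (σ • p)) ∧
      ∀ σ : Equiv.Perm (Fin n), ∃ g : stabilizer G x, ∀ p, g • (e p : V) = e (σ • p)) :
    IsLocallyOPairs n Γ G := by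
  refine ⟨hadj, htrans, fun x => ?_⟩
  obtain ⟨e, hperm, hlift⟩ := h x
  obtain ⟨φ, hφ, hφe⟩ := exists_surjective_hom_of_exists_smul
    (e := fun p => (e p : V)) (Subtype.val_injective.comp e.injective) hperm hlift
  exact ⟨e.symm, φ, hφ, fun g v => by simpa using (hφe g (e.symm v)).symm⟩

end Basics

section LocalGroup

variable {X : Type*} {T : SimpleGraph X} {P : Subgroup (Equiv.Perm X)}

/-- The permutation group induced on the neighbourhood of `x` by the stabiliser of `x` in `P`. -/
def localGroup (T : SimpleGraph X) (P : Subgroup (Equiv.Perm X)) (x : X) :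
    Subgroup (Equiv.Perm (T.neighborSet x)) where
  carrier := {τ | ∃ h ∈ P, h x = x ∧ ∀ y : T.neighborSet x, h y = τ y}
  one_mem' := ⟨1, one_mem P, rfl, fun _ => rfl⟩
  mul_mem' := by
    rintro τ υ ⟨h, hh, hx, hτ⟩ ⟨k, hk, kx, hυ⟩
    exact ⟨h * k, mul_mem hh hk, by simp [hx, kx], fun y => by simp [hτ, hυ]⟩
  inv_mem' := by
    rintro τ ⟨h, hh, hx, hτ⟩
    exact ⟨h⁻¹, inv_mem hh, Equiv.Perm.inv_eq_iff_eq.2 hx.symm,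
      fun y => Equiv.Perm.inv_eq_iff_eq.2 (by simp [hτ])⟩

theorem localGroup_eq_top_of_swap [DecidableEq X] {x : X} [Finite (T.neighborSet x)]
    (h : ∀ y ∈ T.neighborSet x, ∀ z ∈ T.neighborSet x,
      ∃ g ∈ P, g x = x ∧ ∀ v ∈ T.neighborSet x, g v = Equiv.swap y z v) :
    localGroup T P x = ⊤ := by
  rw [eq_top_iff, ← Equiv.Perm.closure_isSwap, Subgroup.closure_le]
  rintro _ ⟨⟨y, hy⟩, ⟨z, hz⟩, -, rfl⟩
  obtain ⟨g, hg, gx, hgv⟩ := h y hy z hz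
  exact ⟨g, hg, gx, fun v => by rw [hgv v v.2, Subtype.val_injective.map_swap]⟩

theorem localGroup_apply_eq_top (hP : PreservesAdj T P) {g : Equiv.Perm X} (hg : g ∈ P) {x : X}
    (hx : localGroup T P x = ⊤) : localGroup T P (g x) = ⊤ := by
  let e : T.neighborSet x ≃ T.neighborSet (g x) := g.subtypeEquiv fun y => hP g hg x y
  refine eq_top_iff.2 fun τ _ => ?_
  obtain ⟨h, hh, hhx, hτ⟩ : e.symm.permCongr τ ∈ localGroup T P x := hx ▸ Subgroup.mem_top _
  refine ⟨g * h * g⁻¹, mul_mem (mul_mem hg hh) (inv_mem hg), by simp [hhx], fun y => ?_⟩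
  obtain ⟨z, rfl⟩ := e.surjective y
  calc (g * h * g⁻¹) (e z) = g (h z) := congr(g (h $(g.symm_apply_apply z)))
    _ = e (e.symm (τ (e z))) := congrArg g (hτ z)
    _ = τ (e z) := congrArg Subtype.val (e.apply_symm_apply _)

theorem isPretransitive_of_adj_apply (hT : T.Connected) (hP : PreservesAdj T P) {x : X}
    (hx : localGroup T P x = ⊤) {g : Equiv.Perm X} (hg : g ∈ P) (hgx : T.Adj x (g x)) :
    IsPretransitive P X := by
  classical
  have neighbor_mem_orbit (y : X) (hy : T.Adj x y) : y ∈ orbit P x := by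
    obtain ⟨h, hh, -, hτ⟩ : Equiv.swap ⟨g x, hgx⟩ ⟨y, hy⟩ ∈ localGroup T P x :=
      hx ▸ Subgroup.mem_top _
    refine ⟨⟨h * g, mul_mem hh hg⟩, ?_⟩
    simpa using hτ ⟨g x, hgx⟩
  have adj_mem_orbit {y z : X} (hy : y ∈ orbit P x) (hyz : T.Adj y z) : z ∈ orbit P x := by
    obtain ⟨k, rfl⟩ := hy
    have : T.Adj x (k⁻¹ • z) := (hP k k.2 _ _).2 <| by
      rwa [show (k : Equiv.Perm X) (k⁻¹ • z) = z from smul_inv_smul k z]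
    simpa using mem_orbit_of_mem_orbit k (neighbor_mem_orbit _ this)
  refine (isPretransitive_iff_base x).2 fun z => ?_
  obtain ⟨w⟩ := hT x z
  suffices ∀ {y z}, T.Walk y z → y ∈ orbit P x → z ∈ orbit P x from this w (mem_orbit_self x)
  intro y z w hy
  induction w with
  | nil => exact hy
  | cons hyz _ ih => exact ih (adj_mem_orbit hy hyz)

end LocalGroup

/-- A representation of the graph `T` by vectors of `M`, equivariant under the group `P` of
automorphisms of `T`: the vectors of the neighbours of a vertex are, together with `0`, the elements
of a subgroup of `M`. -/
structure NeighborRep {X : Type*} (T : SimpleGraph X) (P : Subgroup (Equiv.Perm X)) (M : Type*)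
    [AddCommGroup M] where
  preservesAdj : PreservesAdj T P
  vec : X → M
  vec_injective : Function.Injective vec
  vec_ne_zero (x : X) : vec x ≠ 0
  exists_adj_of_mem_closure (x : X) {m : M} (hm : m ∈ AddSubgroup.closure (vec '' T.neighborSet x))
    (hm₀ : m ≠ 0) : ∃ y, T.Adj x y ∧ vec y = m
  closure_range_vec : AddSubgroup.closure (Set.range vec) = ⊤
  exists_addEquiv {h : Equiv.Perm X} (hh : h ∈ P) : ∃ A : M ≃+ M, ∀ y, A (vec y) = vec (h y)

namespace NeighborRep

variable {X M : Type*} {T : SimpleGraph X} {P : Subgroup (Equiv.Perm X)} [AddCommGroup M]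
  (ρ : NeighborRep T P M)

/-- The subgroup formed by `0` and the vectors of the neighbours of `x`. -/
def localSpan (x : X) : AddSubgroup M := AddSubgroup.closure (ρ.vec '' T.neighborSet x)

/-- The vertices of the coset graph: the cosets of the subgroups `ρ.localSpan x`, each labelled
by `x`. -/
abbrev Vertex : Type _ := Σ x, M ⧸ ρ.localSpan x

/-- The coset of `ρ.localSpan x` through `m`. -/
def coset (x : X) (m : M) : ρ.Vertex := ⟨x, (m : M ⧸ ρ.localSpan x)⟩

/-- The set of elements of a coset. -/
def fiber (s : ρ.Vertex) : Set M := {m | ρ.coset s.1 m = s}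

/-- The coset graph: two labelled cosets are adjacent if their labels are adjacent in `T` and they
intersect. -/
def graph : SimpleGraph ρ.Vertex where
  Adj s t := T.Adj s.1 t.1 ∧ (ρ.fiber s ∩ ρ.fiber t).Nonempty
  symm := ⟨fun _ _ h => ⟨h.1.symm, Set.inter_comm _ _ ▸ h.2⟩⟩
  loopless := ⟨fun _ h => h.1.ne rfl⟩

variable {ρ} {x y : X} {m k p q : M} {s t : ρ.Vertex}

theorem vec_mem_localSpan (h : T.Adj x y) : ρ.vec y ∈ ρ.localSpan x :=
  AddSubgroup.subset_closure ⟨y, h, rfl⟩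

theorem mem_localSpan_iff : m ∈ ρ.localSpan x ↔ m = 0 ∨ ∃ y, T.Adj x y ∧ ρ.vec y = m := by
  refine ⟨fun hm => or_iff_not_imp_left.2 (ρ.exists_adj_of_mem_closure x hm), ?_⟩
  rintro (rfl | ⟨y, hy, rfl⟩)
  · exact zero_mem _
  · exact vec_mem_localSpan hy

theorem coset_eq_coset_iff : ρ.coset x m = ρ.coset x k ↔ k - m ∈ ρ.localSpan x := by
  simp [coset, QuotientAddGroup.eq, sub_eq_neg_add]

theorem exists_coset_eq (s : ρ.Vertex) : ∃ x m, ρ.coset x m = s := by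
  obtain ⟨x, c⟩ := s
  induction c using QuotientAddGroup.induction_on with
  | H m => exact ⟨x, m, rfl⟩

theorem mem_fiber_coset (x : X) (m : M) : m ∈ ρ.fiber (ρ.coset x m) := rfl

theorem mem_fiber_iff_sub_mem (hp : p ∈ ρ.fiber s) : q ∈ ρ.fiber s ↔ q - p ∈ ρ.localSpan s.1 := by
  rw [← coset_eq_coset_iff, show ρ.coset s.1 p = s from hp, eq_comm]
  rfl

theorem mem_fiber_iff (hp : p ∈ ρ.fiber s) :
    q ∈ ρ.fiber s ↔ q = p ∨ ∃ y, T.Adj s.1 y ∧ q = p + ρ.vec y := by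
  simp only [mem_fiber_iff_sub_mem hp, mem_localSpan_iff, sub_eq_zero, eq_sub_iff_add_eq',
    eq_comm (a := q)]

theorem adj_coset_coset (h : T.Adj x y) (m : M) : ρ.graph.Adj (ρ.coset x m) (ρ.coset y m) :=
  ⟨h, m, mem_fiber_coset x m, mem_fiber_coset y m⟩

/-! ### Connectedness -/

theorem reachable_coset_coset (hT : T.Connected) (x y : X) (m : M) :
    ρ.graph.Reachable (ρ.coset x m) (ρ.coset y m) :=
  (hT x y).map ⟨fun z => ρ.coset z m, fun h => adj_coset_coset h m⟩

/-- A vector `ρ.vec y` lies in `ρ.localSpan z` for each neighbour `z` of `y`, so translating by it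
does not move the cosets labelled by `z`. -/
theorem reachable_coset_add [Nontrivial X] (hT : T.Connected) (x : X) (m d : M) :
    ρ.graph.Reachable (ρ.coset x m) (ρ.coset x (m + d)) := by
  have hd : d ∈ AddSubgroup.closure (Set.range ρ.vec) := ρ.closure_range_vec ▸ AddSubgroup.mem_top d
  induction hd using AddSubgroup.closure_induction generalizing m with
  | mem d hd =>
    obtain ⟨y, rfl⟩ := hd
    obtain ⟨z, hyz⟩ := hT.preconnected.exists_adj_of_nontrivial y
    have hz : ρ.coset z m = ρ.coset z (m + ρ.vec y) :=
      coset_eq_coset_iff.2 (by simpa using vec_mem_localSpan hyz.symm)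
    exact (reachable_coset_coset hT x z m).trans (hz ▸ reachable_coset_coset hT z x _)
  | zero => rw [add_zero]
  | add a b _ _ ha hb => exact add_assoc m a b ▸ (ha m).trans (hb (m + a))
  | neg a _ ha => simpa using (ha (m + -a)).symm

theorem graph_connected [Nontrivial X] (hT : T.Connected) : ρ.graph.Connected := by
  have : Nonempty ρ.Vertex := hT.nonempty.map fun x => ρ.coset x 0
  refine ⟨fun s t => ?_⟩
  obtain ⟨x, m, rfl⟩ := exists_coset_eq s
  obtain ⟨y, k, rfl⟩ := exists_coset_eq t
  simpa using (reachable_coset_coset hT _ _ m).trans (reachable_coset_add hT _ m (k - m))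

/-! ### Affine automorphisms -/

variable (ρ) in
/-- The pairs of an element `h` of `P` and an affine permutation of `M` whose linear part maps
`ρ.vec y` to `ρ.vec (h y)`. -/
def affineGroup : Subgroup (Equiv.Perm X × Equiv.Perm M) where
  carrier := {g | g.1 ∈ P ∧ ∀ m y, g.2 (m + ρ.vec y) = g.2 m + ρ.vec (g.1 y)}
  one_mem' := ⟨one_mem P, fun _ _ => rfl⟩
  mul_mem' := by
    rintro g k ⟨hg, hg'⟩ ⟨hk, hk'⟩
    exact ⟨mul_mem hg hk, fun m y => by simp [hk', hg']⟩
  inv_mem' := by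
    rintro g ⟨hg, hg'⟩
    exact ⟨inv_mem hg, fun m y => Equiv.Perm.inv_eq_iff_eq.2 (by simp [hg'])⟩

theorem affineGroup_apply_mem_fiber_coset (g : ρ.affineGroup) (hp : p ∈ ρ.fiber (ρ.coset x m)) :
    g.1.2 p ∈ ρ.fiber (ρ.coset (g.1.1 x) (g.1.2 m)) := by
  obtain rfl | ⟨y, hy, rfl⟩ := (mem_fiber_iff (mem_fiber_coset x m)).1 hp
  · exact mem_fiber_coset _ _
  · exact (mem_fiber_iff (mem_fiber_coset _ _)).2
      (.inr ⟨g.1.1 y, (ρ.preservesAdj _ g.2.1 _ _).1 hy, g.2.2 m y⟩)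

instance : SMul ρ.affineGroup ρ.Vertex where
  smul g s := ⟨g.1.1 s.1, Quotient.liftOn' s.2 (fun m => (g.1.2 m : M ⧸ ρ.localSpan (g.1.1 s.1)))
    fun m k h => by
      have hk : k ∈ ρ.fiber (ρ.coset s.1 m) :=
        (coset_eq_coset_iff.2 <| sub_eq_neg_add k m ▸ QuotientAddGroup.leftRel_apply.1 h).symm
      simpa [fiber, coset, eq_comm] using affineGroup_apply_mem_fiber_coset g hk⟩

theorem smul_coset (g : ρ.affineGroup) (x : X) (m : M) :
    g • ρ.coset x m = ρ.coset (g.1.1 x) (g.1.2 m) := rfl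

instance : MulAction ρ.affineGroup ρ.Vertex where
  one_smul s := by
    obtain ⟨x, m, rfl⟩ := exists_coset_eq s
    simp [smul_coset]
  mul_smul g k s := by
    obtain ⟨x, m, rfl⟩ := exists_coset_eq s
    simp [smul_coset]

theorem affineGroup_apply_mem_fiber_smul (g : ρ.affineGroup) (hm : m ∈ ρ.fiber s) :
    g.1.2 m ∈ ρ.fiber (g • s) := by
  obtain ⟨x, k, rfl⟩ := exists_coset_eq s
  exact affineGroup_apply_mem_fiber_coset g hm

theorem smul_eq_self_of_mem_fiber {g : ρ.affineGroup} (hx : g.1.1 s.1 = s.1) (hm : m ∈ ρ.fiber s)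
    (hgm : g.1.2 m ∈ ρ.fiber s) : g • s = s :=
  calc g • s = g • ρ.coset s.1 m := congrArg (g • ·) hm.symm
    _ = ρ.coset s.1 (g.1.2 m) := congr(ρ.coset $hx _)
    _ = s := hgm

theorem adj_smul_smul (g : ρ.affineGroup) (h : ρ.graph.Adj s t) : ρ.graph.Adj (g • s) (g • t) :=
  ⟨(ρ.preservesAdj _ g.2.1 _ _).1 h.1, by
    obtain ⟨m, hs, ht⟩ := h.2
    exact ⟨_, affineGroup_apply_mem_fiber_smul g hs, affineGroup_apply_mem_fiber_smul g ht⟩⟩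

theorem exists_affineGroup_apply_eq {h : Equiv.Perm X} (hh : h ∈ P) (p q : M) :
    ∃ g : ρ.affineGroup, g.1.1 = h ∧ g.1.2 p = q := by
  obtain ⟨A, hA⟩ := ρ.exists_addEquiv hh
  let a : Equiv.Perm M := (Equiv.subRight p).trans (A.toEquiv.trans (Equiv.addRight q))
  refine ⟨⟨(h, a), hh, fun m y => ?_⟩, rfl, by simp [a]⟩
  simp [a, add_sub_right_comm, add_right_comm, hA]

variable (ρ) in
/-- The group of permutations of the cosets induced by `ρ.affineGroup`. -/
def group : Subgroup (Equiv.Perm ρ.Vertex) := (toPermHom ρ.affineGroup ρ.Vertex).range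

variable (ρ) in
/-- The action of `ρ.affineGroup` as a homomorphism onto `ρ.group`. -/
def toGroup : ρ.affineGroup →* ρ.group := (toPermHom ρ.affineGroup ρ.Vertex).rangeRestrict

theorem toGroup_surjective : Function.Surjective ρ.toGroup := MonoidHom.rangeRestrict_surjective _

theorem toGroup_smul (g : ρ.affineGroup) (s : ρ.Vertex) : ρ.toGroup g • s = g • s := rfl

theorem preservesAdj_group : PreservesAdj ρ.graph ρ.group := by
  refine preservesAdj_of_forall_adj ?_
  rintro _ ⟨g, rfl⟩ s t h
  exact adj_smul_smul g h

theorem isPretransitive_group [IsPretransitive P X] : IsPretransitive ρ.group ρ.Vertex where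
  exists_smul_eq s t := by
    obtain ⟨x, m, rfl⟩ := exists_coset_eq s
    obtain ⟨y, k, rfl⟩ := exists_coset_eq t
    obtain ⟨⟨h, hh⟩, rfl : h x = y⟩ := exists_smul_eq P x y
    obtain ⟨g, rfl, rfl⟩ := exists_affineGroup_apply_eq (ρ := ρ) hh m k
    exact ⟨ρ.toGroup g, smul_coset g x m⟩

/-! ### The local action -/

/-- The neighbours `y` of the label of a coset through `p` correspond to the other elements
`p + ρ.vec y` of the coset. -/
noncomputable def neighborSetEquivNe (p : ρ.fiber s) :
    T.neighborSet s.1 ≃ {q : ρ.fiber s // q ≠ p} :=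
  .ofBijective
    (fun y => ⟨⟨p + ρ.vec y, (mem_fiber_iff p.2).2 (.inr ⟨y, y.2, rfl⟩)⟩,
      fun h => ρ.vec_ne_zero y (by simpa using congrArg Subtype.val h)⟩)
    ⟨fun y z h => Subtype.ext (ρ.vec_injective (by simpa using h)), fun ⟨q, hq⟩ => by
      obtain h | ⟨y, hy, h⟩ := (mem_fiber_iff p.2).1 q.2
      · exact absurd (Subtype.ext h) hq
      · exact ⟨⟨y, hy⟩, Subtype.ext (Subtype.ext h.symm)⟩⟩

theorem coe_neighborSetEquivNe (p : ρ.fiber s) (y : T.neighborSet s.1) :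
    (neighborSetEquivNe p y : M) = p + ρ.vec y := rfl

theorem nonempty_fin_equiv_fiber [T.LocallyFinite] {d : ℕ} (hd : T.IsRegularOfDegree d)
    (s : ρ.Vertex) : Nonempty (Fin (d + 1) ≃ ρ.fiber s) := by
  classical
  obtain ⟨x, m, rfl⟩ := exists_coset_eq s
  let p : ρ.fiber (ρ.coset x m) := ⟨m, mem_fiber_coset x m⟩
  have e : T.neighborSet x ≃ Fin d :=
    Fintype.equivFinOfCardEq ((T.card_neighborSet_eq_degree x).trans (hd x))
  exact ⟨(finSuccEquiv d).trans <|
    (e.symm.trans (neighborSetEquivNe p)).optionCongr.trans (Equiv.optionSubtypeNe p)⟩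

theorem exists_adj_vec_eq_sub {p q : ρ.fiber s} (h : p ≠ q) :
    ∃ y, T.Adj s.1 y ∧ ρ.vec y = q - p := by
  obtain ⟨y, hy⟩ := (neighborSetEquivNe p).surjective ⟨q, h.symm⟩
  refine ⟨y, y.2, eq_sub_of_add_eq' ?_⟩
  rw [← coe_neighborSetEquivNe, hy]

theorem disjoint_localSpan (hT : T.CliqueFree 3) (h : T.Adj x y) :
    Disjoint (ρ.localSpan x) (ρ.localSpan y) := by
  classical
  refine AddSubgroup.disjoint_def.2 fun {m} hx hy => ?_
  obtain rfl | ⟨z, hz, rfl⟩ := mem_localSpan_iff.1 hx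
  · rfl
  obtain h₀ | ⟨z', hz', hzz'⟩ := mem_localSpan_iff.1 hy
  · exact h₀
  obtain rfl := ρ.vec_injective hzz'
  exact absurd (SimpleGraph.is3Clique_triple_iff.2 ⟨h, hz, hz'⟩) (hT _)

theorem eq_of_coset_eq_coset (hT : T.CliqueFree 3) (hy : T.Adj s.1 y) (hp : p ∈ ρ.fiber s)
    (hq : q ∈ ρ.fiber s) (h : ρ.coset y p = ρ.coset y q) : q = p :=
  sub_eq_zero.1 <| AddSubgroup.disjoint_def.1 (disjoint_localSpan hT hy)
    ((mem_fiber_iff_sub_mem hp).1 hq) (coset_eq_coset_iff.1 h)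

theorem exists_opairs_equiv_neighborSet (hT : T.CliqueFree 3) {n : ℕ} (ε : Fin n ≃ ρ.fiber s) :
    ∃ e : OPairs n ≃ ρ.graph.neighborSet s, ∀ ij y,
      ρ.vec y = ε ij.1.2 - ε ij.1.1 → (e ij : ρ.Vertex) = ρ.coset y (ε ij.1.1) := by
  choose y hy hvec using fun ij : OPairs n => exists_adj_vec_eq_sub (ε.injective.ne ij.2)
  let f (ij : OPairs n) : ρ.graph.neighborSet s :=
    ⟨ρ.coset (y ij) (ε ij.1.1), hy ij, ε ij.1.1, (ε ij.1.1).2, mem_fiber_coset _ _⟩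
  have f_injective : Function.Injective f := by
    rintro ⟨⟨i, j⟩, hij⟩ ⟨⟨k, l⟩, hkl⟩ h
    have hlabel : y ⟨(i, j), hij⟩ = y ⟨(k, l), hkl⟩ := congrArg (·.1.1) h
    have hcoset : ρ.coset (y ⟨(i, j), hij⟩) (ε i) = ρ.coset (y ⟨(i, j), hij⟩) (ε k) :=
      (congrArg Subtype.val h).trans (hlabel ▸ rfl)
    obtain rfl : k = i := ε.injective <| Subtype.ext <|
      eq_of_coset_eq_coset hT (hy ⟨(i, j), hij⟩) (ε i).2 (ε k).2 hcoset
    have hsub : (ε j - ε k : M) = ε l - ε k := by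
      rw [← hvec ⟨(k, j), hij⟩, ← hvec ⟨(k, l), hkl⟩, hlabel]
    obtain rfl : j = l := ε.injective (Subtype.ext (sub_left_injective hsub))
    rfl
  have f_surjective : Function.Surjective f := by
    rintro ⟨t, ht, m, hms, hmt⟩
    let p : ρ.fiber s := ⟨m, hms⟩
    let q := neighborSetEquivNe p ⟨t.1, ht⟩
    let ij : OPairs n := ⟨(ε.symm p, ε.symm q), ε.symm.injective.ne q.2.symm⟩
    have hlabel : y ij = t.1 :=
      ρ.vec_injective (by simp [hvec, ij, q, coe_neighborSetEquivNe])
    refine ⟨ij, Subtype.ext ?_⟩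
    calc ρ.coset (y ij) (ε (ε.symm p)) = ρ.coset t.1 p := by rw [hlabel, ε.apply_symm_apply]
      _ = t := hmt
  refine ⟨.ofBijective f ⟨f_injective, f_surjective⟩, fun ij z hz => ?_⟩
  rw [← ρ.vec_injective ((hvec ij).trans hz.symm)]
  rfl

theorem smul_opairs_equiv_neighborSet {n : ℕ} {ε : Fin n ≃ ρ.fiber s}
    {e : OPairs n ≃ ρ.graph.neighborSet s}
    (he : ∀ ij y, ρ.vec y = ε ij.1.2 - ε ij.1.1 → (e ij : ρ.Vertex) = ρ.coset y (ε ij.1.1))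
    {g : ρ.affineGroup} {σ : Equiv.Perm (Fin n)} (hσ : ∀ i, g.1.2 (ε i) = ε (σ i))
    (ij : OPairs n) : g • (e ij : ρ.Vertex) = e (σ • ij) := by
  obtain ⟨⟨i, j⟩, hij⟩ := ij
  obtain ⟨y, -, hy⟩ := exists_adj_vec_eq_sub (ε.injective.ne hij)
  have hgy : ρ.vec (g.1.1 y) = ε (σ j) - ε (σ i) := by
    rw [← hσ, ← hσ, eq_sub_iff_add_eq', ← g.2.2, hy, add_sub_cancel]
  rw [he _ y hy, he _ _ hgy, smul_coset, hσ]
  rfl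

theorem exists_perm_fiber_eq (g : ρ.affineGroup) (hg : g • s = s) :
    ∃ τ : Equiv.Perm (ρ.fiber s), ∀ p : ρ.fiber s, g.1.2 p = τ p := by
  have maps {k : ρ.affineGroup} (hk : k • s = s) {m : M} (hm : m ∈ ρ.fiber s) :
      k.1.2 m ∈ ρ.fiber s := hk ▸ affineGroup_apply_mem_fiber_smul k hm
  have hmem (m : M) : g.1.2 m ∈ ρ.fiber s ↔ m ∈ ρ.fiber s :=
    ⟨fun hm => by simpa using maps (inv_smul_eq_iff.2 hg.symm) hm, maps hg⟩
  exact ⟨g.1.2.subtypePerm hmem, fun _ => rfl⟩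

theorem exists_affineGroup_eq_perm_fiber (hs : localGroup T P s.1 = ⊤)
    (τ : Equiv.Perm (ρ.fiber s)) :
    ∃ g : ρ.affineGroup, g • s = s ∧ ∀ p : ρ.fiber s, g.1.2 p = τ p := by
  obtain ⟨m, hm⟩ : (ρ.fiber s).Nonempty := by
    obtain ⟨x, m, rfl⟩ := exists_coset_eq s
    exact ⟨m, mem_fiber_coset x m⟩
  let p : ρ.fiber s := ⟨m, hm⟩
  let υ : Equiv.Perm (T.neighborSet s.1) := (neighborSetEquivNe p).trans <|
    (τ.subtypeEquiv fun _ => (τ.injective.ne_iff (y := p)).symm).trans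
      (neighborSetEquivNe (τ p)).symm
  have hυ (y : T.neighborSet s.1) : (τ (neighborSetEquivNe p y) : M) = τ p + ρ.vec (υ y) := by
    rw [← coe_neighborSetEquivNe]
    simp [υ]
  obtain ⟨h, hh, hx, hhυ⟩ : υ ∈ localGroup T P s.1 := hs ▸ Subgroup.mem_top υ
  obtain ⟨g, rfl, hg⟩ := exists_affineGroup_apply_eq (ρ := ρ) hh p (τ p)
  refine ⟨g, smul_eq_self_of_mem_fiber hx p.2 (hg ▸ (τ p).2), fun q => ?_⟩
  obtain rfl | hq := eq_or_ne q p
  · exact hg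
  · obtain ⟨y, hy⟩ := (neighborSetEquivNe p).surjective ⟨q, hq⟩
    rw [show q = neighborSetEquivNe p y by rw [hy], hυ, coe_neighborSetEquivNe, g.2.2, hg, hhυ]

theorem isLocallyOPairs [T.LocallyFinite] [IsPretransitive P X] {d : ℕ}
    (hd : T.IsRegularOfDegree d) (hT : T.CliqueFree 3) (hP : ∀ x, localGroup T P x = ⊤) :
    IsLocallyOPairs (d + 1) ρ.graph ρ.group := by
  refine isLocallyOPairs_of_exists_perm preservesAdj_group isPretransitive_group fun s => ?_
  obtain ⟨ε⟩ := nonempty_fin_equiv_fiber hd s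
  obtain ⟨e, he⟩ := exists_opairs_equiv_neighborSet hT ε
  refine ⟨e, ?_, fun σ => ?_⟩
  · rintro ⟨k, hk⟩
    obtain ⟨g, rfl⟩ := toGroup_surjective k
    obtain ⟨τ, hτ⟩ := exists_perm_fiber_eq g hk
    exact ⟨ε.symm.permCongr τ, smul_opairs_equiv_neighborSet he fun i => by simp [hτ]⟩
  · obtain ⟨g, hg, hgσ⟩ := exists_affineGroup_eq_perm_fiber (hP s.1) (ε.permCongr σ)
    exact ⟨⟨ρ.toGroup g, hg⟩, smul_opairs_equiv_neighborSet he fun i => by simp [hgσ]⟩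

/-! ### Pointwise stabilisers of balls -/

theorem toGroup_mem_ballStab [Nontrivial X] (hT : T.Connected) {g : ρ.affineGroup} {i : ℕ}
    (hg : ⟨g.1.1, g.2.1⟩ ∈ ballStab T P s.1 i) (hm : m ∈ ρ.fiber s) (hgm : g.1.2 m = m) :
    ρ.toGroup g ∈ ballStab ρ.graph ρ.group s i := by
  have hΓ : ρ.graph.Connected := graph_connected hT
  have hgs (hx : g.1.1 s.1 = s.1) : g • s = s := smul_eq_self_of_mem_fiber hx hm (hgm.symm ▸ hm)
  induction i generalizing s m with
  | zero =>
    rw [mem_ballStab_zero_iff hT] at hg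
    exact (mem_ballStab_zero_iff hΓ).2 (hgs hg)
  | succ i ih =>
    obtain ⟨hx, hnbr⟩ := (mem_ballStab_succ_iff hT).1 hg
    refine (mem_ballStab_succ_iff hΓ).2 ⟨hgs hx, ?_⟩
    rintro t ⟨hst, k, hks, hkt⟩
    have hgk : g.1.2 k = k := by
      obtain rfl | ⟨y, hy, rfl⟩ := (mem_fiber_iff hm).1 hks
      · exact hgm
      · have hgy : g.1.1 y = y := mem_ballStab_iff.1 (hnbr y hy) y (by simp)
        rw [g.2.2, hgm, hgy]
    exact ih (hnbr t.1 hst) hkt hgk fun hx' => smul_eq_self_of_mem_fiber hx' hkt (hgk.symm ▸ hkt)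

theorem ballStab_coset_ne_bot [Nontrivial X] (hT : T.Connected) {i : ℕ}
    (h : ballStab T P x i ≠ ⊥) (m : M) : ballStab ρ.graph ρ.group (ρ.coset x m) i ≠ ⊥ := by
  obtain ⟨⟨h, hh⟩, hne⟩ := Subgroup.ne_bot_iff_exists_ne_one.1 h
  obtain ⟨g, hgh, hgm⟩ := exists_affineGroup_apply_eq (ρ := ρ) h.2 m m
  obtain rfl : ⟨g.1.1, g.2.1⟩ = h := Subtype.ext hgh
  have hg : ρ.toGroup g ∈ ballStab ρ.graph ρ.group (ρ.coset x m) i :=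
    toGroup_mem_ballStab hT hh (mem_fiber_coset x m) hgm
  intro hbot
  rw [hbot, Subgroup.mem_bot] at hg
  have hgy (y : X) : g.1.1 y = y := by
    have hy : g • ρ.coset y m = ρ.coset y m := by rw [← toGroup_smul, hg, one_smul]
    exact congrArg Sigma.fst hy
  exact hne (Subtype.ext (Subtype.ext (Equiv.ext hgy)))

end NeighborRep

section ElementaryAbelian

variable {A : Type*} [AddCommGroup A]

theorem mem_closure_triple_of_add_eq_zero [Module (ZMod 2) A] {a b c m : A} (h : a + b + c = 0)
    (hm : m ∈ AddSubgroup.closure {a, b, c}) : m = 0 ∨ m = a ∨ m = b ∨ m = c := by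
  obtain rfl : c = a + b := by rw [← ZModModule.neg_eq_self c, ← eq_neg_of_add_eq_zero_left h]
  have hle : AddSubgroup.closure {a, b, a + b} ≤
      (Submodule.span (ZMod 2) {a, b}).toAddSubgroup := by
    have ha : a ∈ Submodule.span (ZMod 2) {a, b} := Submodule.mem_span_of_mem (by simp)
    have hb : b ∈ Submodule.span (ZMod 2) {a, b} := Submodule.mem_span_of_mem (by simp)
    simp [AddSubgroup.closure_le, Set.insert_subset_iff, ha, hb, add_mem ha hb]
  obtain ⟨r, t, rfl⟩ := Submodule.mem_span_pair.1 (hle hm)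
  have zero_or_one : ∀ r : ZMod 2, r = 0 ∨ r = 1 := by decide
  obtain rfl | rfl := zero_or_one r <;> obtain rfl | rfl := zero_or_one t <;> simp

theorem eq_zero_or_exists_adj_of_mem_closure {X : Type*} {T : SimpleGraph X} [T.LocallyFinite]
    [Module (ZMod 2) A] (hd : T.IsRegularOfDegree 3) {w : X → A} {x : X}
    (hsum : ∑ y ∈ T.neighborFinset x, w y = 0) {m : A}
    (hm : m ∈ AddSubgroup.closure (w '' T.neighborSet x)) :
    m = 0 ∨ ∃ y, T.Adj x y ∧ w y = m := by
  classical
  obtain ⟨a, b, c, hab, hac, hbc, h⟩ := Finset.card_eq_three.1 (hd x)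
  have hadj {y : X} : T.Adj x y ↔ y = a ∨ y = b ∨ y = c := by
    rw [← SimpleGraph.mem_neighborFinset, h]
    simp
  have hset : T.neighborSet x = {a, b, c} := Set.ext fun _ => hadj
  rw [hset, Set.image_insert_eq, Set.image_pair] at hm
  have habc : w a + w b + w c = 0 := by
    rw [← hsum, h, Finset.sum_insert (by simp [hab, hac]), Finset.sum_pair hbc, add_assoc]
  simpa [hadj, eq_comm] using mem_closure_triple_of_add_eq_zero habc hm

/-- The representation of `T` in the subgroup of `A` generated by given vectors. -/
def NeighborRep.ofClosure {X : Type*} {T : SimpleGraph X} {P : Subgroup (Equiv.Perm X)}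
    (hP : PreservesAdj T P) (w : X → A) (hw : Function.Injective w) (hw₀ : ∀ x, w x ≠ 0)
    (hclosure : ∀ x, ∀ m ∈ AddSubgroup.closure (w '' T.neighborSet x),
      m = 0 ∨ ∃ y, T.Adj x y ∧ w y = m)
    (hlift : ∀ h ∈ P, ∃ B : A ≃+ A, ∀ y, B (w y) = w (h y)) :
    NeighborRep T P (AddSubgroup.closure (Set.range w)) where
  preservesAdj := hP
  vec x := ⟨w x, AddSubgroup.subset_closure ⟨x, rfl⟩⟩
  vec_injective x y h := hw (congrArg Subtype.val h)
  vec_ne_zero x h := hw₀ x (congrArg Subtype.val h)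
  exists_adj_of_mem_closure x m hm hm₀ := by
    have hm' : (m : A) ∈ AddSubgroup.closure (w '' T.neighborSet x) := by
      simpa [AddMonoidHom.map_closure, Set.image_image] using
        AddSubgroup.mem_map_of_mem (AddSubgroup.subtype _) hm
    obtain h | ⟨y, hy, h⟩ := hclosure x m hm'
    · exact absurd (Subtype.ext h) hm₀
    · exact ⟨y, hy, Subtype.ext h⟩
  closure_range_vec := by
    rw [← AddSubgroup.closure_closure_coe_preimage (k := Set.range w)]
    exact congrArg _ (Set.ext fun _ => exists_congr fun _ => Subtype.ext_iff)
  exists_addEquiv {h} hh := by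
    obtain ⟨B, hB⟩ := hlift h hh
    have hmap : (AddSubgroup.closure (Set.range w)).map (B : A →+ A) =
        AddSubgroup.closure (Set.range w) := by
      rw [AddMonoidHom.map_closure, ← Set.range_comp, ← h.surjective.range_comp w]
      exact congrArg (fun f => AddSubgroup.closure (Set.range f)) (funext hB)
    exact ⟨(B.addSubgroupMap _).trans (.addSubgroupCongr hmap), fun y => Subtype.ext (hB y)⟩

end ElementaryAbelian

section Opposite

variable {X : Type*} {T : SimpleGraph X}

/-- The group of automorphisms of `T`, as a group of permutations of its vertices. -/
def automorphismGroup (T : SimpleGraph X) : Subgroup (Equiv.Perm X) where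
  carrier := {g | ∀ u v, T.Adj u v ↔ T.Adj (g u) (g v)}
  one_mem' _ _ := Iff.rfl
  mul_mem' hg hk u v := (hk u v).trans (hg _ _)
  inv_mem' {g} hg u v := by simpa using (hg (g⁻¹ u) (g⁻¹ v)).symm

theorem preservesAdj_automorphismGroup : PreservesAdj T (automorphismGroup T) := fun _ hg => hg

/-- The vertices `x` and `z` are not joined by a walk of length `2` or `3`. In a connected graph
with more than one vertex this says that their distance is at least `4`. -/
def AreOpposite (T : SimpleGraph X) (x z : X) : Prop :=
  ∀ w, T.Adj x w → ∀ v, T.Adj w v → v ≠ z ∧ ¬T.Adj v z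

theorem areOpposite_apply_apply_iff {g : Equiv.Perm X} (hg : g ∈ automorphismGroup T) {x z : X} :
    AreOpposite T (g x) (g z) ↔ AreOpposite T x z := by
  refine (g.forall_congr fun w => imp_congr (hg x w) <| g.forall_congr fun v =>
    imp_congr (hg w v) <| and_congr g.injective.ne_iff.symm <| not_congr (hg v z)).symm

/-- The vector over the field with two elements marking the vertices opposite to `x`. -/
def oppositeVec (T : SimpleGraph X) [DecidableRel (AreOpposite T)] (x : X) : X → ZMod 2 :=
  fun z => if AreOpposite T x z then 1 else 0

theorem oppositeVec_apply_apply [DecidableRel (AreOpposite T)] {g : Equiv.Perm X}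
    (hg : g ∈ automorphismGroup T) (x z : X) :
    oppositeVec T (g x) (g z) = oppositeVec T x z := by
  simp only [oppositeVec, areOpposite_apply_apply_iff hg]

theorem exists_addEquiv_oppositeVec [DecidableRel (AreOpposite T)] {g : Equiv.Perm X}
    (hg : g ∈ automorphismGroup T) :
    ∃ B : (X → ZMod 2) ≃+ (X → ZMod 2), ∀ x, B (oppositeVec T x) = oppositeVec T (g x) := by
  refine ⟨(LinearEquiv.funCongrLeft (ZMod 2) (ZMod 2) g⁻¹).toAddEquiv, fun x => funext fun z => ?_⟩
  obtain ⟨z, rfl⟩ := g.surjective z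
  simp [oppositeVec_apply_apply hg, LinearMap.funLeft]

theorem sum_oppositeVec_apply_apply [T.LocallyFinite] [DecidableRel (AreOpposite T)]
    {g : Equiv.Perm X} (hg : g ∈ automorphismGroup T) (x z : X) :
    ∑ y ∈ T.neighborFinset (g x), oppositeVec T y (g z) =
      ∑ y ∈ T.neighborFinset x, oppositeVec T y z :=
  (Finset.sum_equiv g (fun y => by simpa using hg x y)
    fun y _ => (oppositeVec_apply_apply hg y z).symm).symm

end Opposite

namespace TutteCoxeter

/-- The Tutte–Coxeter graph in LCF notation `[-13, -9, 7, -7, 9, 13]^5`: besides `x - 1` and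
`x + 1`, the vertex `x` is adjacent to `x + chord x`. -/
def chord (x : Fin 30) : Fin 30 := ![-13, -9, 7, -7, 9, 13] (Fin.ofNat 6 x)

/-- The three neighbours of a vertex of the Tutte–Coxeter graph. -/
def neighbors (x : Fin 30) : Finset (Fin 30) := {x - 1, x + 1, x + chord x}

/-- The Tutte–Coxeter graph, the smallest cubic graph of girth `8`. -/
def graph : SimpleGraph (Fin 30) where
  Adj x y := y ∈ neighbors x
  symm := ⟨by decide +kernel⟩
  loopless := ⟨by decide +kernel⟩

instance : DecidableRel graph.Adj := fun x y => inferInstanceAs (Decidable (y ∈ neighbors x))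

instance : DecidableRel (AreOpposite graph) := fun x z => inferInstanceAs
  (Decidable (∀ w ∈ neighbors x, ∀ v ∈ neighbors w, v ≠ z ∧ z ∉ neighbors v))

theorem connected : graph.Connected := by
  refine (SimpleGraph.connected_iff_exists_forall_reachable _).2 ⟨0, fun x => ?_⟩
  have adj_succ : ∀ x : Fin 29, graph.Adj x.castSucc x.succ := by decide +kernel
  induction x using Fin.induction with
  | zero => rfl
  | succ x ih => exact ih.trans (adj_succ x).reachable

theorem isRegularOfDegree : graph.IsRegularOfDegree 3 :=
  show ∀ x, graph.degree x = 3 by decide +kernel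

theorem cliqueFree : graph.CliqueFree 3 := by
  have no_triangle : ∀ x, ∀ y ∈ neighbors x, ∀ z ∈ neighbors x, z ∉ neighbors y := by
    decide +kernel
  intro s hs
  obtain ⟨x, y, z, hxy, hxz, hyz, rfl⟩ := SimpleGraph.is3Clique_iff.1 hs
  exact no_triangle x y hxy z hxz hyz

/-! ### Automorphisms -/

/-- The rotation of the LCF notation by one period. -/
def rotation : Equiv.Perm (Fin 30) := Equiv.addRight 6

/-- The reflection of the LCF notation. -/
def reflection : Equiv.Perm (Fin 30) := Equiv.subLeft (-1)

open Equiv in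
/-- The automorphism other than `1` that fixes every vertex at distance at most `2` from `0`. -/
def elation : Equiv.Perm (Fin 30) :=
  swap 3 9 * swap 4 10 * swap 5 19 * swap 6 20 * swap 7 27 * swap 8 26 * swap 11 13 * swap 14 24 *
    swap 15 25 * swap 21 23

theorem rotation_mem : rotation ∈ automorphismGroup graph :=
  show ∀ u v, graph.Adj u v ↔ graph.Adj (rotation u) (rotation v) by decide +kernel

theorem reflection_mem : reflection ∈ automorphismGroup graph :=
  show ∀ u v, graph.Adj u v ↔ graph.Adj (reflection u) (reflection v) by decide +kernel

theorem elation_mem : elation ∈ automorphismGroup graph :=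
  show ∀ u v, graph.Adj u v ↔ graph.Adj (elation u) (elation v) by decide +kernel

theorem localGroup_zero : localGroup graph (automorphismGroup graph) 0 = ⊤ := by
  let g : Equiv.Perm (Fin 30) := rotation ^ 2 * elation * (rotation ^ 2)⁻¹
  let k : Equiv.Perm (Fin 30) := rotation ^ 3 * elation * (rotation ^ 3)⁻¹
  have conj_mem (i : ℕ) : rotation ^ i * elation * (rotation ^ i)⁻¹ ∈ automorphismGroup graph :=
    mul_mem (mul_mem (pow_mem rotation_mem i) elation_mem) (inv_mem (pow_mem rotation_mem i))
  have hmem : ∀ f ∈ [1, g, k, g * k * g], f ∈ automorphismGroup graph := by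
    have hg := conj_mem 2
    have hk := conj_mem 3
    simp [g, k, hg, hk, one_mem, mul_mem]
  have exists_swap : ∀ y ∈ neighbors 0, ∀ z ∈ neighbors 0, ∃ f ∈ [1, g, k, g * k * g],
      f 0 = 0 ∧ ∀ v ∈ neighbors 0, f v = Equiv.swap y z v := by
    decide +kernel
  refine localGroup_eq_top_of_swap fun y hy z hz => ?_
  obtain ⟨f, hf, h⟩ := exists_swap y hy z hz
  exact ⟨f, hmem f hf, h⟩

instance : IsPretransitive (automorphismGroup graph) (Fin 30) :=
  isPretransitive_of_adj_apply connected preservesAdj_automorphismGroup localGroup_zero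
    reflection_mem (by decide +kernel)

theorem localGroup_eq_top (x : Fin 30) : localGroup graph (automorphismGroup graph) x = ⊤ := by
  obtain ⟨g, rfl⟩ := exists_smul_eq (automorphismGroup graph) 0 x
  exact localGroup_apply_eq_top preservesAdj_automorphismGroup g.2 localGroup_zero

theorem ballStab_two_ne_bot : ballStab graph (automorphismGroup graph) 0 2 ≠ ⊥ := by
  refine Subgroup.ne_bot_iff_exists_ne_one.2 ⟨⟨⟨elation, elation_mem⟩, ?_⟩, fun h => ?_⟩
  · have fixes : elation 0 = 0 ∧ ∀ y ∈ neighbors 0, elation y = y ∧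
        ∀ z ∈ neighbors y, elation z = z := by
      decide +kernel
    simp only [mem_ballStab_succ_iff connected, mem_ballStab_zero_iff connected]
    exact fixes
  · have moves : elation 3 ≠ 3 := by decide +kernel
    exact moves congr($h • (3 : Fin 30))

/-! ### Opposite vertices -/

theorem oppositeVec_injective : Function.Injective (oppositeVec graph) := by decide +kernel

theorem oppositeVec_ne_zero : ∀ x, oppositeVec graph x ≠ 0 := by decide +kernel

theorem sum_oppositeVec_eq_zero (x : Fin 30) :
    ∑ y ∈ graph.neighborFinset x, oppositeVec graph y = 0 := by
  have sum_zero : ∀ z, ∑ y ∈ graph.neighborFinset 0, oppositeVec graph y z = 0 := by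
    decide +kernel
  obtain ⟨⟨g, hg⟩, rfl : g 0 = x⟩ := exists_smul_eq (automorphismGroup graph) 0 x
  ext z
  obtain ⟨z, rfl⟩ := g.surjective z
  rw [Finset.sum_apply, sum_oppositeVec_apply_apply hg, sum_zero, Pi.zero_apply]

/-- The representation of the Tutte–Coxeter graph by the sets of opposite vertices. -/
noncomputable def neighborRep : NeighborRep graph (automorphismGroup graph)
    (AddSubgroup.closure (Set.range (oppositeVec graph))) :=
  .ofClosure preservesAdj_automorphismGroup _ oppositeVec_injective oppositeVec_ne_zero
    (fun x _ => eq_zero_or_exists_adj_of_mem_closure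
      isRegularOfDegree (sum_oppositeVec_eq_zero x)) fun _ => exists_addEquiv_oppositeVec

end TutteCoxeter

/-- there is a locally `L` pair `(Γ,G)`, for `L ≅ Sym(4)` acting on the
twelve ordered pairs of distinct elements of `{1,2,3,4}`, and a vertex `x` with
`G_x^{[2]} ≠ 1`; hence the bound `G_x^{[3]} = 1` is best possible for `n = 4`. -/
theorem stmt_12 :
    ∃ (V : Type) (_ : Fintype V) (Γ : SimpleGraph V) (G : Subgroup (Equiv.Perm V)),
      Γ.Connected ∧ IsLocallyOPairs 4 Γ G ∧ ∃ x : V, ballStab Γ G x 2 ≠ ⊥ := by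
  let ρ := TutteCoxeter.neighborRep
  exact ⟨ρ.Vertex, Fintype.ofFinite _, ρ.graph, ρ.group,
    NeighborRep.graph_connected TutteCoxeter.connected,
    NeighborRep.isLocallyOPairs TutteCoxeter.isRegularOfDegree TutteCoxeter.cliqueFree
      TutteCoxeter.localGroup_eq_top,
    ρ.coset 0 0,
    NeighborRep.ballStab_coset_ne_bot TutteCoxeter.connected TutteCoxeter.ballStab_two_ne_bot 0⟩
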